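/- Let μ be a probability measure on ℝ with μ([0,∞)) = 1 and mean a = ∫ x dμ(x) satisfying 0 < a < ∞, and let μ* denote its size-biased measure. Then the following are equivalent: (i) there exists a probability measure ν on ℝ with ν([0,∞)) = 1 such that μ* = μ ∗ ν (convolution); (ii) μ is infinitely divisible, i.e., for every positive integer n there exists a probability measure ρ on ℝ such that μ equals the n-fold convolution ρ ∗ ρ ∗ ⋯ ∗ ρ. -/

import Mathlib

open MeasureTheory

/-- The size-biased measure of `μ`: `dμ*(x) = (x / ∫ y dμ(y)) dμ(x)`. -/
noncomputable def sizeBiased (μ : Measure ℝ) : Measure ℝ :=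
  μ.withDensity (fun x => ENNReal.ofReal (x / ∫ y, y ∂μ))

/-- Convolution of two measures on ℝ: pushforward of the product under addition. -/
noncomputable def mconv (μ ν : Measure ℝ) : Measure ℝ :=
  Measure.map (fun p : ℝ × ℝ => p.1 + p.2) (μ.prod ν)

/-- `convPow ρ n` is the `n`-fold convolution `ρ ∗ ⋯ ∗ ρ` (with `convPow ρ 0 = δ₀`). -/
noncomputable def convPow (ρ : Measure ℝ) : ℕ → Measure ℝ
  | 0 => Measure.dirac 0
  | n + 1 => mconv (convPow ρ n) ρ

/-!
Write `a` for the mean of `μ` and `φ` for characteristic functions. Size biasing is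
differentiation: `φ_μ' = i a φ_{μ*}`.

If `μ* = μ ∗ ν`, then `φ_μ' = i a φ_ν φ_μ`, hence `φ_μ(t) = exp (i ∫₀ᵗ φ_{aν})`. The exponent is
linear in the measure `a ν`, so an `n`-th root of `μ` exists as soon as `exp (i ∫₀ᵗ φ_{(a/n)ν})` is
a characteristic function. For any finite measure `K` on `[0, ∞)`, `exp (i ∫₀ᵗ φ_K)` is one: if
`x⁻¹ K` is finite it belongs to the compound Poisson law with jump measure `x⁻¹ K`, and in general
one shifts `K` to the right by `ε → 0` and applies Lévy's continuity theorem.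

Conversely, if `μ = ρₙ^{∗(n+1)}`, then only one of the `n + 1` summands gets biased:
`μ* = ρₙ^{∗n} ∗ ρₙ*`. Since `φ_{ρₙ} → 1`, the laws `ρₙ*` converge, and their limit is `ν`.
-/

open Filter Topology Complex
open scoped ENNReal Nat

/-- Infinite divisibility: `μ` has a convolution root of every positive order among the probability
measures on `ℝ`. -/
def IsInfinitelyDivisible (μ : Measure ℝ) : Prop :=
  ∀ n : ℕ, 0 < n → ∃ ρ : Measure ℝ, IsProbabilityMeasure ρ ∧ μ = convPow ρ n

section Convolution

variable {μ ν ρ : Measure ℝ}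

instance isFiniteMeasure_mconv [IsFiniteMeasure μ] [IsFiniteMeasure ν] :
    IsFiniteMeasure (mconv μ ν) :=
  inferInstanceAs (IsFiniteMeasure (Measure.conv μ ν))

instance isProbabilityMeasure_mconv [IsProbabilityMeasure μ] [IsProbabilityMeasure ν] :
    IsProbabilityMeasure (mconv μ ν) :=
  inferInstanceAs (IsProbabilityMeasure (Measure.conv μ ν))

instance isFiniteMeasure_convPow [IsFiniteMeasure ρ] (n : ℕ) : IsFiniteMeasure (convPow ρ n) := by
  induction n with
  | zero => exact inferInstanceAs (IsFiniteMeasure (Measure.dirac 0))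
  | succ n ih => exact isFiniteMeasure_mconv

instance isProbabilityMeasure_convPow [IsProbabilityMeasure ρ] (n : ℕ) :
    IsProbabilityMeasure (convPow ρ n) := by
  induction n with
  | zero => exact inferInstanceAs (IsProbabilityMeasure (Measure.dirac 0))
  | succ n ih => exact isProbabilityMeasure_mconv

lemma charFun_mconv [IsFiniteMeasure μ] [IsFiniteMeasure ν] (t : ℝ) :
    charFun (mconv μ ν) t = charFun μ t * charFun ν t :=
  charFun_conv t

lemma charFun_convPow [IsFiniteMeasure ρ] (n : ℕ) (t : ℝ) :
    charFun (convPow ρ n) t = charFun ρ t ^ n := by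
  induction n with
  | zero => simp [convPow, charFun_dirac]
  | succ n ih => rw [convPow, charFun_mconv, ih, pow_succ]

lemma measure_Iio_mul_le_mconv [SFinite ν] :
    μ (Set.Iio 0) * ν (Set.Iio 0) ≤ mconv μ ν (Set.Iio 0) := by
  rw [mconv, Measure.map_apply (by fun_prop) measurableSet_Iio, ← Measure.prod_prod]
  exact measure_mono fun p hp => show p.1 + p.2 < 0 from add_neg hp.1 hp.2

lemma measure_Iio_pow_le_convPow [IsFiniteMeasure ρ] (n : ℕ) :
    ρ (Set.Iio 0) ^ (n + 1) ≤ convPow ρ (n + 1) (Set.Iio 0) := by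
  induction n with
  | zero =>
    have h : convPow ρ 1 = ρ := Measure.dirac_zero_conv ρ
    simp only [zero_add, pow_one, h, le_refl]
  | succ n ih =>
    calc ρ (Set.Iio 0) ^ (n + 2)
        = ρ (Set.Iio 0) ^ (n + 1) * ρ (Set.Iio 0) := pow_succ _ _
      _ ≤ convPow ρ (n + 1) (Set.Iio 0) * ρ (Set.Iio 0) := by gcongr
      _ ≤ convPow ρ (n + 2) (Set.Iio 0) := measure_Iio_mul_le_mconv

lemma ae_nonneg_of_ae_nonneg_convPow_succ [IsFiniteMeasure ρ] {n : ℕ}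
    (h : ∀ᵐ x ∂convPow ρ (n + 1), 0 ≤ x) : ∀ᵐ x ∂ρ, 0 ≤ x := by
  simp only [ae_iff, not_le] at h ⊢
  exact eq_zero_of_pow_eq_zero (le_zero_iff.mp ((measure_Iio_pow_le_convPow n).trans h.le))

lemma ae_nonneg_mconv (hμ : ∀ᵐ x ∂μ, 0 ≤ x) (hν : ∀ᵐ x ∂ν, 0 ≤ x) :
    ∀ᵐ x ∂mconv μ ν, 0 ≤ x := by
  rw [mconv, ae_map_iff (by fun_prop) measurableSet_Ici]
  filter_upwards [Measure.quasiMeasurePreserving_fst.ae hμ,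
    Measure.quasiMeasurePreserving_snd.ae hν] with p h₁ h₂
  exact add_nonneg h₁ h₂

lemma ae_nonneg_convPow (hρ : ∀ᵐ x ∂ρ, 0 ≤ x) (n : ℕ) :
    ∀ᵐ x ∂convPow ρ n, 0 ≤ x := by
  induction n with
  | zero => simp [convPow, ae_dirac_eq]
  | succ n ih => exact ae_nonneg_mconv ih hρ

lemma lintegral_ofReal_mconv [IsProbabilityMeasure μ] [IsProbabilityMeasure ν]
    (hμ : ∀ᵐ x ∂μ, 0 ≤ x) (hν : ∀ᵐ x ∂ν, 0 ≤ x) :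
    ∫⁻ x, ENNReal.ofReal x ∂mconv μ ν =
      ∫⁻ x, ENNReal.ofReal x ∂μ + ∫⁻ x, ENNReal.ofReal x ∂ν := by
  calc ∫⁻ x, ENNReal.ofReal x ∂mconv μ ν
      = ∫⁻ x, ∫⁻ y, ENNReal.ofReal (x + y) ∂ν ∂μ :=
        Measure.lintegral_conv ENNReal.measurable_ofReal
    _ = ∫⁻ x, ∫⁻ y, (ENNReal.ofReal x + ENNReal.ofReal y) ∂ν ∂μ := by
        refine lintegral_congr_ae (hμ.mono fun x hx => lintegral_congr_ae ?_)
        exact hν.mono fun y hy => ENNReal.ofReal_add hx hy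
    _ = ∫⁻ x, ENNReal.ofReal x ∂μ + ∫⁻ x, ENNReal.ofReal x ∂ν := by
        simp [lintegral_add_left, ENNReal.measurable_ofReal]

lemma lintegral_ofReal_convPow [IsProbabilityMeasure ρ] (hρ : ∀ᵐ x ∂ρ, 0 ≤ x) (n : ℕ) :
    ∫⁻ x, ENNReal.ofReal x ∂convPow ρ n = n * ∫⁻ x, ENNReal.ofReal x ∂ρ := by
  induction n with
  | zero => simp [convPow]
  | succ n ih =>
    rw [convPow, lintegral_ofReal_mconv (ae_nonneg_convPow hρ n) hρ, ih, Nat.cast_succ, add_one_mul]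

-- Passing through `[0, ∞]` covers an infinite mean as well: both sides are then `0`.
lemma integral_convPow [IsProbabilityMeasure ρ] (hρ : ∀ᵐ x ∂ρ, 0 ≤ x) (n : ℕ) :
    ∫ x, x ∂convPow ρ n = n * ∫ x, x ∂ρ := by
  rw [integral_eq_lintegral_of_nonneg_ae (ae_nonneg_convPow hρ n) (by fun_prop),
    integral_eq_lintegral_of_nonneg_ae hρ (by fun_prop), lintegral_ofReal_convPow hρ,
    ENNReal.toReal_mul, ENNReal.toReal_natCast]

lemma integral_pos_of_integral_convPow_pos [IsProbabilityMeasure ρ] (hρ : ∀ᵐ x ∂ρ, 0 ≤ x) {n : ℕ}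
    (ha : 0 < ∫ x, x ∂convPow ρ n) : 0 < ∫ x, x ∂ρ :=
  pos_of_mul_pos_right (integral_convPow hρ n ▸ ha) n.cast_nonneg

end Convolution

section CharFun

variable {μ : Measure ℝ}

lemma charFun_smul_measure {E : Type*} [Inner ℝ E] [MeasurableSpace E] {μ : Measure E}
    (c : ℝ≥0∞) (t : E) :
    charFun (c • μ) t = c.toReal * charFun μ t := by
  rw [charFun_apply, integral_smul_measure, ← charFun_apply, real_smul]

lemma charFun_withDensity_ofReal {f : ℝ → ℝ} (hf : Measurable f) (hf₀ : ∀ᵐ x ∂μ, 0 ≤ f x)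
    (t : ℝ) :
    charFun (μ.withDensity fun x => ENNReal.ofReal (f x)) t = ∫ x, f x * cexp (t * x * I) ∂μ := by
  rw [charFun_apply_real, integral_withDensity_eq_integral_toReal_smul (by fun_prop) (by simp)]
  refine integral_congr_ae (hf₀.mono fun x hx => ?_)
  simp only [ENNReal.toReal_ofReal hx, real_smul]

lemma hasDerivAt_charFun [IsFiniteMeasure μ] (hμ : Integrable id μ) (t : ℝ) :
    HasDerivAt (charFun μ) (I * ∫ x, x * cexp (t * x * I) ∂μ) t := by
  have hmem : MemLp id ((1 : ℕ) : ℝ≥0∞) μ := by simpa using memLp_one_iff_integrable.2 hμ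
  have hdiff : DifferentiableAt ℝ (charFun μ) t :=
    (contDiff_charFun hmem).differentiable (by simp) t
  have hderiv := iteratedDeriv_charFun (t := t) hmem
  simp only [iteratedDeriv_one, pow_one] at hderiv
  exact hderiv ▸ hdiff.hasDerivAt

lemma norm_charFun_sub_charFun_le [IsFiniteMeasure μ] (hμ : Integrable id μ) (s t : ℝ) :
    ‖charFun μ t - charFun μ s‖ ≤ (∫ x, |x| ∂μ) * |t - s| := by
  refine Convex.norm_image_sub_le_of_norm_hasDerivWithin_le (𝕜 := ℝ)
    (fun u _ => (hasDerivAt_charFun hμ u).hasDerivWithinAt) (fun u _ => ?_)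
    convex_univ (Set.mem_univ s) (Set.mem_univ t)
  rw [norm_mul, norm_I, one_mul]
  refine norm_integral_le_of_norm_le hμ.abs (ae_of_all _ fun x => ?_)
  rw [norm_mul, ← ofReal_mul, norm_exp_ofReal_mul_I, mul_one, norm_real, Real.norm_eq_abs]

end CharFun

section WeakConvergence

/-- **Lévy's continuity theorem**, with a limit function not known to be a characteristic
function. -/
theorem exists_tendsto_of_tendsto_charFun {E : Type*} [NormedAddCommGroup E]
    [InnerProductSpace ℝ E] [FiniteDimensional ℝ E] [MeasurableSpace E] [BorelSpace E]
    {P : ℕ → ProbabilityMeasure E} {f : E → ℂ} (hf : ContinuousAt f 0)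
    (h : ∀ t, Tendsto (fun n => charFun (P n : Measure E) t) atTop (𝓝 (f t))) :
    ∃ Q : ProbabilityMeasure E, (∀ t, charFun (Q : Measure E) t = f t) ∧ Tendsto P atTop (𝓝 Q) := by
  have htight : IsTightMeasureSet {((μ : ProbabilityMeasure E) : Measure E) | μ ∈ Set.range P} := by
    have hrange := isTightMeasureSet_of_tendsto_charFun hf h
    rwa [← Function.comp_def, Set.range_comp] at hrange
  obtain ⟨Q, -, s, hs, hlim⟩ := (isCompact_closure_of_isTightMeasureSet htight).tendsto_subseq
    fun n => subset_closure (Set.mem_range_self n)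
  have hQ : ∀ t, charFun (Q : Measure E) t = f t := fun t =>
    tendsto_nhds_unique (ProbabilityMeasure.tendsto_iff_tendsto_charFun.1 hlim t)
      ((h t).comp hs.tendsto_atTop)
  exact ⟨Q, hQ, ProbabilityMeasure.tendsto_iff_tendsto_charFun.2 fun t => hQ t ▸ h t⟩

lemma measure_eq_one_of_tendsto_of_isClosed {Ω ι : Type*} [MeasurableSpace Ω] [TopologicalSpace Ω]
    [OpensMeasurableSpace Ω] [HasOuterApproxClosed Ω] {L : Filter ι} [L.NeBot]
    {P : ι → ProbabilityMeasure Ω} {Q : ProbabilityMeasure Ω} (h : Tendsto P L (𝓝 Q)) {F : Set Ω}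
    (hF : IsClosed F) (hP : ∀ i, (P i : Measure Ω) F = 1) : (Q : Measure Ω) F = 1 := by
  have hle := ProbabilityMeasure.limsup_measure_closed_le_of_tendsto h hF
  simp only [hP, limsup_const] at hle
  exact le_antisymm prob_le_one hle

end WeakConvergence

section SizeBias

variable {μ ρ : Measure ℝ}

lemma isProbabilityMeasure_sizeBiased (hμ : ∀ᵐ x ∂μ, 0 ≤ x) (ha : 0 < ∫ x, x ∂μ) :
    IsProbabilityMeasure (sizeBiased μ) := by
  have hint : Integrable (fun x => x) μ := .of_integral_ne_zero ha.ne'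
  constructor
  rw [sizeBiased, withDensity_apply _ MeasurableSet.univ, Measure.restrict_univ,
    ← ofReal_integral_eq_lintegral_ofReal (hint.div_const _)
      (hμ.mono fun x hx => div_nonneg hx ha.le),
    integral_div, div_self ha.ne', ENNReal.ofReal_one]

lemma ae_nonneg_sizeBiased (hμ : ∀ᵐ x ∂μ, 0 ≤ x) : ∀ᵐ x ∂sizeBiased μ, 0 ≤ x :=
  (withDensity_absolutelyContinuous _ _).ae_le hμ

lemma hasDerivAt_charFun_sizeBiased [IsFiniteMeasure μ] (hμ : ∀ᵐ x ∂μ, 0 ≤ x)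
    (ha : 0 < ∫ x, x ∂μ) (t : ℝ) :
    HasDerivAt (charFun μ) (I * ((∫ x, x ∂μ : ℝ) * charFun (sizeBiased μ) t)) t := by
  have ha' : ((∫ x, x ∂μ : ℝ) : ℂ) ≠ 0 := mod_cast ha.ne'
  convert hasDerivAt_charFun (.of_integral_ne_zero ha.ne') t using 2
  rw [sizeBiased, charFun_withDensity_ofReal (by fun_prop)
    (hμ.mono fun x hx => div_nonneg hx ha.le), ← integral_const_mul]
  refine integral_congr_ae (ae_of_all _ fun x => ?_)
  push_cast
  field_simp

lemma sizeBiased_convPow_succ [IsProbabilityMeasure ρ] (hρ : ∀ᵐ x ∂ρ, 0 ≤ x)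
    (ha : 0 < ∫ x, x ∂ρ) (n : ℕ) :
    sizeBiased (convPow ρ (n + 1)) = mconv (convPow ρ n) (sizeBiased ρ) := by
  have hpow := ae_nonneg_convPow hρ (n + 1)
  have hmean : ∫ x, x ∂convPow ρ (n + 1) = (n + 1 : ℕ) * ∫ x, x ∂ρ := integral_convPow hρ (n + 1)
  have ha_pow : 0 < ∫ x, x ∂convPow ρ (n + 1) := by rw [hmean]; positivity
  have := isProbabilityMeasure_sizeBiased hρ ha
  have := isProbabilityMeasure_sizeBiased hpow ha_pow
  refine Measure.ext_of_charFun (funext fun t => ?_)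
  have hchar : charFun (convPow ρ (n + 1)) = charFun ρ ^ (n + 1) := funext (charFun_convPow (n + 1))
  have hderiv := (hasDerivAt_charFun_sizeBiased hpow ha_pow t).unique
    (hchar ▸ (hasDerivAt_charFun_sizeBiased hρ ha t).pow (n + 1))
  have ha_ne : I * ((∫ x, x ∂convPow ρ (n + 1) : ℝ) : ℂ) ≠ 0 :=
    mul_ne_zero I_ne_zero (mod_cast ha_pow.ne')
  rw [charFun_mconv, charFun_convPow]
  refine mul_left_cancel₀ ha_ne ?_
  rw [mul_assoc, hderiv, hmean, Nat.add_sub_cancel]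
  push_cast
  ring

end SizeBias

section CompoundPoisson

variable {l : Measure ℝ}

/-- The compound Poisson law `e^{-l(ℝ)} ∑ₖ l^{∗k} / k!` with jump measure `l`. The jump measure is
not normalized: its total mass is the expected number of jumps. -/
noncomputable def compoundPoisson (l : Measure ℝ) : Measure ℝ :=
  ENNReal.ofReal (Real.exp (-l.real Set.univ)) •
    Measure.sum fun k : ℕ => (k ! : ℝ≥0∞)⁻¹ • convPow l k

lemma measureReal_univ_convPow [IsFiniteMeasure l] (n : ℕ) :
    (convPow l n).real Set.univ = l.real Set.univ ^ n := by
  exact_mod_cast (charFun_zero (convPow l n)) ▸ (charFun_zero l) ▸ charFun_convPow (ρ := l) n 0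

instance isFiniteMeasure_compoundPoisson [IsFiniteMeasure l] :
    IsFiniteMeasure (compoundPoisson l) := by
  have hint : Integrable (fun _ => (1 : ℝ))
      (Measure.sum fun k : ℕ => (k ! : ℝ≥0∞)⁻¹ • convPow l k) := by
    refine integrable_sum_measure
      (fun k => (integrable_const _).smul_measure (by simp [Nat.factorial_ne_zero])) ?_
    simpa [measureReal_univ_convPow, div_eq_inv_mul] using
      Real.summable_pow_div_factorial (l.real Set.univ)
  have := (integrable_const_iff_isFiniteMeasure one_ne_zero).1 hint
  exact Measure.smul_finite _ ENNReal.ofReal_ne_top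

lemma charFun_compoundPoisson [IsFiniteMeasure l] (t : ℝ) :
    charFun (compoundPoisson l) t = cexp (charFun l t - charFun l 0) := by
  have hint : Integrable (fun x : ℝ => cexp (t * x * I)) (compoundPoisson l) :=
    (integrable_const (1 : ℝ)).mono (by fun_prop) (ae_of_all _ fun x => by
      rw [← ofReal_mul, norm_exp_ofReal_mul_I, norm_one])
  have hint_sum : Integrable (fun x : ℝ => cexp (t * x * I))
      (Measure.sum fun k : ℕ => (k ! : ℝ≥0∞)⁻¹ • convPow l k) :=
    (integrable_smul_measure (by simp [Real.exp_pos]) (by simp)).1 hint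
  have hterm (k : ℕ) : ∫ x : ℝ, cexp (t * x * I) ∂((k ! : ℝ≥0∞)⁻¹ • convPow l k) =
      charFun l t ^ k / k ! := by
    rw [← charFun_apply_real, charFun_smul_measure, charFun_convPow]
    simp [div_eq_inv_mul]
  have hseries : ∫ x : ℝ, cexp (t * x * I) ∂(Measure.sum fun k : ℕ =>
      (k ! : ℝ≥0∞)⁻¹ • convPow l k) = cexp (charFun l t) := by
    simp_rw [integral_sum_measure hint_sum, hterm, exp_eq_exp_ℂ, NormedSpace.exp_eq_tsum_div]
  rw [compoundPoisson, charFun_smul_measure, charFun_apply_real, hseries,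
    ENNReal.toReal_ofReal (Real.exp_nonneg _), charFun_zero, sub_eq_neg_add, Complex.exp_add]
  push_cast
  rfl

instance isProbabilityMeasure_compoundPoisson [IsFiniteMeasure l] :
    IsProbabilityMeasure (compoundPoisson l) := by
  have h := charFun_compoundPoisson (l := l) 0
  rw [sub_self, Complex.exp_zero, charFun_zero] at h
  exact isProbabilityMeasure_iff_real.2 (mod_cast h)

end CompoundPoisson

section CanonicalMeasure

variable {K l μ ν ρ : Measure ℝ}

/-- `K` is the canonical measure of `μ`: the characteristic function of `μ` is
`exp (i ∫₀ᵗ φ_K(s) ds)`. In the Lévy–Khintchine representation of a law on `[0, ∞)` with finite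
mean, `K {0}` is the drift and `x⁻¹ K(dx)` on `(0, ∞)` is the Lévy measure. -/
def HasCanonicalMeasure (μ K : Measure ℝ) : Prop :=
  ∀ t, charFun μ t = cexp (I * ∫ s in (0 : ℝ)..t, charFun K s)

namespace HasCanonicalMeasure

lemma unique [IsFiniteMeasure μ] [IsFiniteMeasure ν] (hμ : HasCanonicalMeasure μ K)
    (hν : HasCanonicalMeasure ν K) : μ = ν :=
  Measure.ext_of_charFun (funext fun t => (hμ t).trans (hν t).symm)

lemma convPow [IsFiniteMeasure ρ] {c : ℝ≥0∞} {n : ℕ} (h : HasCanonicalMeasure ρ (c • K)) :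
    HasCanonicalMeasure (convPow ρ n) ((n * c) • K) := by
  intro t
  rw [charFun_convPow, h t, ← Complex.exp_nat_mul]
  simp only [charFun_smul_measure, intervalIntegral.integral_const_mul, ENNReal.toReal_mul,
    ENNReal.toReal_natCast]
  push_cast
  ring_nf

end HasCanonicalMeasure

lemma hasCanonicalMeasure_compoundPoisson [IsFiniteMeasure l] (hl : ∀ᵐ x ∂l, 0 ≤ x)
    (hint : Integrable id l) :
    HasCanonicalMeasure (compoundPoisson l) (l.withDensity ENNReal.ofReal) := by
  intro t
  have : IsFiniteMeasure (l.withDensity ENNReal.ofReal) :=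
    isFiniteMeasure_withDensity_ofReal hint.2
  have hderiv (s : ℝ) :
      HasDerivAt (charFun l) (I * charFun (l.withDensity ENNReal.ofReal) s) s := by
    rw [charFun_withDensity_ofReal (f := fun x => x) measurable_id hl]
    exact hasDerivAt_charFun hint s
  rw [charFun_compoundPoisson, ← intervalIntegral.integral_const_mul,
    intervalIntegral.integral_eq_sub_of_hasDerivAt (fun s _ => hderiv s)
      (Continuous.intervalIntegrable (by fun_prop) _ _)]

lemma exists_hasCanonicalMeasure_of_ae_ge [IsFiniteMeasure K] {ε : ℝ} (hε : 0 < ε)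
    (hK : ∀ᵐ x ∂K, ε ≤ x) :
    ∃ ρ : Measure ℝ, IsProbabilityMeasure ρ ∧ HasCanonicalMeasure ρ K := by
  have hpos : ∀ᵐ x ∂K, 0 < x := hK.mono fun x => hε.trans_le
  set l := K.withDensity fun x => ENNReal.ofReal x⁻¹ with hl
  have hbound : ∀ᵐ x ∂K, ‖x⁻¹‖ ≤ ε⁻¹ := by
    filter_upwards [hK, hpos] with x hx hx₀
    rw [norm_inv, Real.norm_of_nonneg hx₀.le]
    gcongr
  have hl_fin : IsFiniteMeasure l :=
    isFiniteMeasure_withDensity_ofReal (Integrable.of_bound (by fun_prop) _ hbound).2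
  have hl_nonneg : ∀ᵐ x ∂l, 0 ≤ x :=
    (withDensity_absolutelyContinuous _ _).ae_le (hpos.mono fun x => le_of_lt)
  have hK_eq : l.withDensity ENNReal.ofReal = K := by
    rw [hl, ← withDensity_mul _ (by fun_prop) (by fun_prop)]
    refine (withDensity_congr_ae (hpos.mono fun x hx => ?_)).trans withDensity_one
    simp [← ENNReal.ofReal_mul (inv_nonneg.2 hx.le), inv_mul_cancel₀ hx.ne']
  have hint : Integrable id l := by
    refine (lintegral_ofReal_ne_top_iff_integrable (by fun_prop) hl_nonneg).1 ?_
    have := measure_ne_top K Set.univ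
    rwa [← hK_eq, withDensity_apply _ MeasurableSet.univ, Measure.restrict_univ] at this
  exact ⟨compoundPoisson l, inferInstance,
    hK_eq ▸ hasCanonicalMeasure_compoundPoisson hl_nonneg hint⟩

lemma exists_hasCanonicalMeasure_of_tendsto {K : ℕ → Measure ℝ} {K' : Measure ℝ}
    [∀ n, SFinite (K n)] [IsFiniteMeasure K'] {C : ℝ} (hK : ∀ n, (K n).real Set.univ ≤ C)
    (hlim : ∀ s, Tendsto (fun n => charFun (K n) s) atTop (𝓝 (charFun K' s)))
    (h : ∀ n, ∃ ρ : Measure ℝ, IsProbabilityMeasure ρ ∧ HasCanonicalMeasure ρ (K n)) :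
    ∃ ρ : Measure ℝ, IsProbabilityMeasure ρ ∧ HasCanonicalMeasure ρ K' := by
  choose ρ hρ hρK using h
  have hint (t : ℝ) : Tendsto (fun n => ∫ s in (0 : ℝ)..t, charFun (K n) s) atTop
      (𝓝 (∫ s in (0 : ℝ)..t, charFun K' s)) := by
    refine intervalIntegral.tendsto_integral_filter_of_dominated_convergence (fun _ => C)
      (.of_forall fun n => measurable_charFun.aestronglyMeasurable)
      (.of_forall fun n => ae_of_all _ fun s _ => (norm_charFun_le s).trans (hK n)) (by simp)
      (ae_of_all _ fun s _ => hlim s)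
  have hcont : Continuous fun t => cexp (I * ∫ s in (0 : ℝ)..t, charFun K' s) :=
    (continuous_const.mul (intervalIntegral.continuous_primitive
      (fun a b => Continuous.intervalIntegrable (by fun_prop) a b) 0)).cexp
  obtain ⟨Q, hQ, -⟩ := exists_tendsto_of_tendsto_charFun (P := fun n => ⟨ρ n, hρ n⟩)
    hcont.continuousAt fun t => by
      simp only [ProbabilityMeasure.coe_mk, hρK _ t]
      exact ((hint t).const_mul I).cexp
  exact ⟨Q, inferInstance, hQ⟩

theorem exists_hasCanonicalMeasure [IsFiniteMeasure K] (hK : ∀ᵐ x ∂K, 0 ≤ x) :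
    ∃ ρ : Measure ℝ, IsProbabilityMeasure ρ ∧ HasCanonicalMeasure ρ K := by
  let ε : ℕ → ℝ := fun n => 1 / ((n : ℝ) + 1)
  have hε : Tendsto ε atTop (𝓝 0) := tendsto_one_div_add_atTop_nhds_zero_nat
  refine exists_hasCanonicalMeasure_of_tendsto (K := fun n => K.map (· + ε n))
    (C := K.real Set.univ) (fun n => ?_) (fun s => ?_) (fun n => ?_)
  · rw [map_measureReal_apply (by fun_prop) MeasurableSet.univ, Set.preimage_univ]
  · simp only [charFun_map_add_const]
    have hcont : Continuous fun u : ℝ => charFun K s * cexp (inner ℝ u s * I) := by fun_prop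
    simpa [Function.comp_def] using (hcont.tendsto 0).comp hε
  · refine exists_hasCanonicalMeasure_of_ae_ge (ε := ε n) Nat.one_div_pos_of_nat ?_
    rw [ae_map_iff (by fun_prop) measurableSet_Ici]
    exact hK.mono fun x => le_add_of_nonneg_left

end CanonicalMeasure

section SizeBiasIncrement

variable {μ ν : Measure ℝ}

lemma eq_mul_cexp_integral_of_hasDerivAt {f g : ℝ → ℂ} (hg : Continuous g)
    (hf : ∀ t, HasDerivAt f (g t * f t) t) (t : ℝ) :
    f t = f 0 * cexp (∫ s in (0 : ℝ)..t, g s) := by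
  set G : ℝ → ℂ := fun t => ∫ s in (0 : ℝ)..t, g s
  have hG (t : ℝ) : HasDerivAt G (g t) t := hg.integral_hasStrictDerivAt 0 t |>.hasDerivAt
  have hderiv (t : ℝ) : HasDerivAt (fun t => f t * cexp (-G t)) 0 t :=
    ((hf t).mul (hG t).neg.cexp).congr_deriv (by simp only [Pi.neg_apply]; ring)
  have hconst : f t * cexp (-G t) = f 0 * cexp (-G 0) :=
    is_const_of_deriv_eq_zero (fun t => (hderiv t).differentiableAt) (fun t => (hderiv t).deriv) t 0
  have hG₀ : G 0 = 0 := intervalIntegral.integral_same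
  rw [hG₀, neg_zero, Complex.exp_zero, mul_one] at hconst
  rw [← hconst, mul_assoc, ← Complex.exp_add, neg_add_cancel, Complex.exp_zero, mul_one]

lemma hasCanonicalMeasure_of_sizeBiased_eq_mconv [IsProbabilityMeasure μ] [IsFiniteMeasure ν]
    (hμ : ∀ᵐ x ∂μ, 0 ≤ x) (ha : 0 < ∫ x, x ∂μ) (h : sizeBiased μ = mconv μ ν) :
    HasCanonicalMeasure μ (ENNReal.ofReal (∫ x, x ∂μ) • ν) := by
  intro t
  have hderiv (s : ℝ) :
      HasDerivAt (charFun μ) (I * charFun (ENNReal.ofReal (∫ x, x ∂μ) • ν) s * charFun μ s) s := by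
    refine (hasDerivAt_charFun_sizeBiased hμ ha s).congr_deriv ?_
    rw [h, charFun_mconv, charFun_smul_measure, ENNReal.toReal_ofReal ha.le]
    ring
  have hfin := Measure.smul_finite ν (c := ENNReal.ofReal (∫ x, x ∂μ)) ENNReal.ofReal_ne_top
  rw [eq_mul_cexp_integral_of_hasDerivAt (by fun_prop) hderiv t,
    intervalIntegral.integral_const_mul, charFun_zero, probReal_univ, ofReal_one, one_mul]

theorem isInfinitelyDivisible_of_sizeBiased_eq_mconv [IsProbabilityMeasure μ] [IsFiniteMeasure ν]
    (hμ : ∀ᵐ x ∂μ, 0 ≤ x) (ha : 0 < ∫ x, x ∂μ) (hν : ∀ᵐ x ∂ν, 0 ≤ x)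
    (h : sizeBiased μ = mconv μ ν) : IsInfinitelyDivisible μ := by
  intro n hn
  set a := ENNReal.ofReal (∫ x, x ∂μ)
  have hn₀ : (n : ℝ≥0∞) ≠ 0 := mod_cast hn.ne'
  have hfin : IsFiniteMeasure ((a / n) • ν) :=
    Measure.smul_finite ν (ENNReal.div_ne_top ENNReal.ofReal_ne_top hn₀)
  obtain ⟨ρ, hρ, hρν⟩ := exists_hasCanonicalMeasure (Measure.ae_smul_measure hν (a / n))
  have hroot : HasCanonicalMeasure (convPow ρ n) (a • ν) := by
    simpa only [ENNReal.mul_div_cancel hn₀ (ENNReal.natCast_ne_top n)] using hρν.convPow (n := n)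
  exact ⟨ρ, hρ, (hasCanonicalMeasure_of_sizeBiased_eq_mconv hμ ha h).unique hroot⟩

end SizeBiasIncrement

section ConvolutionRoots

variable {μ : Measure ℝ} {ρ : ℕ → Measure ℝ} [∀ n, IsProbabilityMeasure (ρ n)]

lemma tendsto_charFun_convRoot (hρ : ∀ n, ∀ᵐ x ∂ρ n, 0 ≤ x) (ha : 0 < ∫ x, x ∂μ)
    (h : ∀ n, μ = convPow (ρ n) (n + 1)) (t : ℝ) :
    Tendsto (fun n => charFun (ρ n) t) atTop (𝓝 1) := by
  have hmean (n : ℕ) : ∫ x, x ∂ρ n = (∫ x, x ∂μ) * (1 / ((n : ℝ) + 1)) := by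
    rw [h n, integral_convPow (hρ n), Nat.cast_succ]
    field_simp
  have hbound (n : ℕ) :
      ‖charFun (ρ n) t - 1‖ ≤ (∫ x, x ∂μ) * (1 / ((n : ℝ) + 1)) * |t| := by
    have hpos : 0 < ∫ x, x ∂ρ n := integral_pos_of_integral_convPow_pos (hρ n) (h n ▸ ha)
    have habs : ∫ x, |x| ∂ρ n = ∫ x, x ∂ρ n :=
      integral_congr_ae ((hρ n).mono fun x => abs_of_nonneg)
    simpa [habs, hmean n] using
      norm_charFun_sub_charFun_le (μ := ρ n) (.of_integral_ne_zero hpos.ne') 0 t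
  have hlim : Tendsto (fun n : ℕ => (∫ x, x ∂μ) * (1 / ((n : ℝ) + 1)) * |t|) atTop (𝓝 0) := by
    simpa only [mul_zero, zero_mul] using
      (tendsto_one_div_add_atTop_nhds_zero_nat.const_mul (∫ x, x ∂μ)).mul_const |t|
  exact tendsto_iff_norm_sub_tendsto_zero.2 (squeeze_zero (fun _ => norm_nonneg _) hbound hlim)

lemma charFun_ne_zero_of_convRoots (hρ : ∀ n, ∀ᵐ x ∂ρ n, 0 ≤ x) (ha : 0 < ∫ x, x ∂μ)
    (h : ∀ n, μ = convPow (ρ n) (n + 1)) (t : ℝ) : charFun μ t ≠ 0 := by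
  obtain ⟨n, hn⟩ := ((tendsto_charFun_convRoot hρ ha h t).eventually_ne one_ne_zero).exists
  rw [h n, charFun_convPow]
  exact pow_ne_zero _ hn

lemma tendsto_charFun_sizeBiased_convRoot (hρ : ∀ n, ∀ᵐ x ∂ρ n, 0 ≤ x) (ha : 0 < ∫ x, x ∂μ)
    (h : ∀ n, μ = convPow (ρ n) (n + 1)) (t : ℝ) :
    Tendsto (fun n => charFun (sizeBiased (ρ n)) t) atTop
      (𝓝 (charFun (sizeBiased μ) t / charFun μ t)) := by
  have hμ_ne := charFun_ne_zero_of_convRoots hρ ha h t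
  have hquot (n : ℕ) : charFun (sizeBiased (ρ n)) t =
      charFun (sizeBiased μ) t / charFun μ t * charFun (ρ n) t := by
    have hpos := integral_pos_of_integral_convPow_pos (hρ n) (h n ▸ ha)
    have := isProbabilityMeasure_sizeBiased (hρ n) hpos
    have hbias : charFun (sizeBiased μ) t =
        charFun (ρ n) t ^ n * charFun (sizeBiased (ρ n)) t := by
      rw [h n, sizeBiased_convPow_succ (hρ n) hpos, charFun_mconv, charFun_convPow]
    have hpow : charFun μ t = charFun (ρ n) t ^ n * charFun (ρ n) t := by
      rw [h n, charFun_convPow, pow_succ]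
    rw [div_mul_eq_mul_div, eq_div_iff hμ_ne, hbias, hpow]
    ring
  simpa only [hquot, mul_one] using (tendsto_charFun_convRoot hρ ha h t).const_mul
    (charFun (sizeBiased μ) t / charFun μ t)

theorem exists_sizeBiased_eq_mconv_of_isInfinitelyDivisible [IsProbabilityMeasure μ]
    (hμ : ∀ᵐ x ∂μ, 0 ≤ x) (ha : 0 < ∫ x, x ∂μ) (h : IsInfinitelyDivisible μ) :
    ∃ ν : Measure ℝ, IsProbabilityMeasure ν ∧ ν (Set.Ici 0) = 1 ∧ sizeBiased μ = mconv μ ν := by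
  choose ρ hρ_prob hroot using fun n : ℕ => h (n + 1) n.succ_pos
  have hρ (n : ℕ) : ∀ᵐ x ∂ρ n, 0 ≤ x := ae_nonneg_of_ae_nonneg_convPow_succ (hroot n ▸ hμ)
  have hbias_prob (n : ℕ) : IsProbabilityMeasure (sizeBiased (ρ n)) :=
    isProbabilityMeasure_sizeBiased (hρ n)
      (integral_pos_of_integral_convPow_pos (hρ n) (hroot n ▸ ha))
  have := isProbabilityMeasure_sizeBiased hμ ha
  have hμ_ne := charFun_ne_zero_of_convRoots hρ ha hroot
  let P : ℕ → ProbabilityMeasure ℝ := fun n => ⟨sizeBiased (ρ n), hbias_prob n⟩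
  obtain ⟨ν, hν, hlim⟩ := exists_tendsto_of_tendsto_charFun (P := P)
    (f := fun t => charFun (sizeBiased μ) t / charFun μ t)
    (ContinuousAt.div (by fun_prop) (by fun_prop) (hμ_ne 0))
    (tendsto_charFun_sizeBiased_convRoot hρ ha hroot)
  refine ⟨ν, inferInstance, measure_eq_one_of_tendsto_of_isClosed hlim isClosed_Ici fun n =>
    (mem_ae_iff_prob_eq_one measurableSet_Ici).1 (ae_nonneg_sizeBiased (hρ n)), ?_⟩
  refine Measure.ext_of_charFun (funext fun t => ?_)
  rw [charFun_mconv, hν, mul_div_cancel₀ _ (hμ_ne t)]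

end ConvolutionRoots

/-- Steutel's theorem: for a nonnegative probability measure `μ` with finite positive
mean, the size-biased measure is a convolution `μ ∗ ν` with `ν` a nonnegative probability
measure iff `μ` is infinitely divisible. -/
theorem sizeBias_indep_increment_iff_infinitelyDivisible
    (μ : Measure ℝ) [IsProbabilityMeasure μ]
    (hsupp : μ (Set.Ici 0) = 1)
    (hint : Integrable id μ)
    (ha : 0 < ∫ x, x ∂μ) :
    (∃ ν : Measure ℝ, IsProbabilityMeasure ν ∧ ν (Set.Ici 0) = 1 ∧
        sizeBiased μ = mconv μ ν) ↔
    (∀ n : ℕ, 0 < n → ∃ ρ : Measure ℝ, IsProbabilityMeasure ρ ∧ μ = convPow ρ n) := by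
  have hμ : ∀ᵐ x ∂μ, 0 ≤ x := (mem_ae_iff_prob_eq_one measurableSet_Ici).2 hsupp
  refine ⟨?_, exists_sizeBiased_eq_mconv_of_isInfinitelyDivisible hμ ha⟩
  rintro ⟨ν, _, hν, h⟩
  have hν_nonneg : ∀ᵐ x ∂ν, 0 ≤ x := (mem_ae_iff_prob_eq_one measurableSet_Ici).2 hν
  exact isInfinitelyDivisible_of_sizeBiased_eq_mconv hμ ha hν_nonneg h
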